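/- Assume (σ_min + σ_min,m+1)/2 < τ < (σ_max + σ_max,m+1)/2 and τ ≠ σᵢ for all 1 ≤ i ≤ N, and let r ∈ ℝ^{M+N} satisfy Π_m r = r. Set d_{m+1} = min_{m<i≤N} |σᵢ − τ|. Then for every j ∈ ℕ there exists w ∈ K_j(B_m, r) such that ‖B_m w + r‖ ≤ 2 · (1 − 2/(1 + (σ_max + τ)/d_{m+1}))^{⌊j/2⌋} · ‖r‖, where ⌊·⌋ denotes the integer part. -/

import Mathlib

open Matrix

noncomputable def vnorm {ι : Type*} [Fintype ι] (x : ι → ℝ) : ℝ :=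
  Real.sqrt (∑ i, x i ^ 2)

noncomputable def Krylov {ι : Type*} [Fintype ι] [DecidableEq ι]
    (B : Matrix ι ι ℝ) (r : ι → ℝ) (j : ℕ) : Submodule ℝ (ι → ℝ) :=
  Submodule.span ℝ {x | ∃ i < j, x = (B ^ i) *ᵥ r}

open Polynomial in
lemma aux_vecMul_aeval {ι : Type*} [Fintype ι] [DecidableEq ι]
    (C : Matrix ι ι ℝ) (v : ι → ℝ) (l : ℝ) (h : v ᵥ* C = l • v) (p : ℝ[X]) :
    v ᵥ* (aeval C p) = p.eval l • v := by
  induction p using Polynomial.induction_on' with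
  | add p q hp hq => simp [vecMul_add, hp, hq, add_smul]
  | monomial n a =>
    have hn : ∀ n : ℕ, v ᵥ* (C ^ n) = l ^ n • v := by
      intro n
      induction n with
      | zero => simp
      | succ n ih => rw [pow_succ, ← vecMul_vecMul, ih, smul_vecMul, h, smul_smul, pow_succ]
    rw [aeval_monomial, eval_monomial, ← Algebra.smul_def, vecMul_smul, hn, smul_smul]

lemma aux_vnorm_eq {ι : Type*} [Fintype ι] (x : ι → ℝ) : vnorm x = ‖WithLp.toLp 2 x‖ := by
  rw [EuclideanSpace.norm_eq]; simp [vnorm]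

open Polynomial in
lemma aux_poly_bound {ι : Type*} [Fintype ι] [DecidableEq ι]
    (C : Matrix ι ι ℝ) (hC : Cᵀ = C) (p : ℝ[X]) (c : ℝ) (hc : 0 ≤ c) (r : ι → ℝ)
    (h : ∀ (l : ℝ) (v : ι → ℝ), C *ᵥ v = l • v → v ⬝ᵥ r ≠ 0 → |p.eval l| ≤ c) :
    vnorm ((aeval C p) *ᵥ r) ≤ c * vnorm r := by
  have hH : C.IsHermitian := by
    rw [Matrix.IsHermitian, conjTranspose_eq_transpose_of_trivial, hC]
  set b := hH.eigenvectorBasis with hb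
  have hin : ∀ i (x : ι → ℝ), inner ℝ (b i) (WithLp.toLp 2 x) = (b i).ofLp ⬝ᵥ x := by
    intro i x
    rw [EuclideanSpace.inner_eq_star_dotProduct]
    simp [dotProduct_comm]
  rw [aux_vnorm_eq, aux_vnorm_eq]
  apply le_of_sq_le_sq _ (by positivity)
  rw [mul_pow, ← b.sum_sq_norm_inner_right, ← b.sum_sq_norm_inner_right, Finset.mul_sum]
  refine Finset.sum_le_sum fun i _ => ?_
  rw [hin, hin]
  have hv := hH.mulVec_eigenvectorBasis i
  rw [← hb] at hv
  have hv2 : (b i).ofLp ᵥ* C = hH.eigenvalues i • (b i).ofLp := by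
    have h3 : (b i).ofLp ᵥ* C = C *ᵥ (b i).ofLp := by
      conv_lhs => rw [← hC, vecMul_transpose]
    rw [h3, hv]
  rw [dotProduct_mulVec, aux_vecMul_aeval C _ _ hv2, smul_dotProduct]
  by_cases h0 : (b i).ofLp ⬝ᵥ r = 0
  · simp [h0]
  · have := h _ _ hv h0
    rw [smul_eq_mul, norm_mul, mul_pow]
    gcongr
    exact this

open Polynomial in
lemma aux_krylov {ι : Type*} [Fintype ι] [DecidableEq ι]
    (C : Matrix ι ι ℝ) (r : ι → ℝ) (j : ℕ) (p : ℝ[X]) (hp : p.natDegree ≤ j)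
    (h0 : p.eval 0 = 1) : ∃ w ∈ Krylov C r j, C *ᵥ w + r = (aeval C p) *ᵥ r := by
  refine ⟨(aeval C p.divX) *ᵥ r, ?_, ?_⟩
  · rw [aeval_def, eval₂_eq_sum, Polynomial.sum_def, Matrix.sum_mulVec]
    refine Submodule.sum_mem _ fun i hi => ?_
    rw [← Algebra.smul_def, smul_mulVec]
    refine Submodule.smul_mem _ _ (Submodule.subset_span ⟨i, ?_, rfl⟩)
    rw [mem_support_iff, coeff_divX] at hi
    have := le_natDegree_of_ne_zero hi
    omega
  · conv_rhs => rw [← X_mul_divX_add p]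
    rw [coeff_zero_eq_eval_zero, h0]
    simp [add_mulVec, mulVec_mulVec]

open Polynomial in
lemma aux_cheb (d L : ℝ) (hd : 0 < d) (hL : d < L) (k : ℕ) :
    ∃ p : ℝ[X], p.natDegree ≤ 2 * k ∧ p.eval 0 = 1 ∧
      ∀ x, d ≤ |x| → |x| ≤ L → |p.eval x| ≤ 2 * (1 - 2 / (1 + L / d)) ^ k := by
  set t : ℝ := (L + d) / (L - d) with ht
  have h1 : 0 < L - d := by linarith
  have h2 : 0 < L + d := by linarith
  have htpos : 0 < t := by positivity
  have hba : 0 < L ^ 2 - d ^ 2 := by nlinarith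
  set y : ℝ := (L ^ 2 + d ^ 2) / (L ^ 2 - d ^ 2) with hy
  have hcosh : Real.cosh (Real.log t) = y := by
    rw [Real.cosh_log htpos, ht, hy, inv_div]
    have : L ^ 2 - d ^ 2 = (L - d) * (L + d) := by ring
    rw [this]
    field_simp
    ring
  have hT : t ^ k / 2 ≤ (Chebyshev.T ℝ (k : ℤ)).eval y := by
    rw [← hcosh, Chebyshev.T_real_cosh, Real.cosh_eq]
    have : Real.exp (((k : ℤ) : ℝ) * Real.log t) = t ^ k := by
      rw [← Real.exp_log (pow_pos htpos k), Real.log_pow]; simp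
    rw [this]
    have := Real.exp_pos (-(((k : ℤ) : ℝ) * Real.log t))
    linarith
  have htk : 0 < t ^ k := by positivity
  set D := (Chebyshev.T ℝ (k : ℤ)).eval y with hD
  have hDpos : 0 < D := by linarith
  have hrho : 1 - 2 / (1 + L / d) = t⁻¹ := by
    have h3 : 1 + L / d = (L + d) / d := by field_simp; ring
    rw [ht, inv_div, h3]; field_simp; ring
  refine ⟨C D⁻¹ * (Chebyshev.T ℝ (k : ℤ)).comp (C y - C (2 / (L ^ 2 - d ^ 2)) * X ^ 2), ?_, ?_, ?_⟩
  · refine (natDegree_C_mul_le _ _).trans (natDegree_comp_le.trans ?_)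
    rw [Chebyshev.natDegree_T, Int.natAbs_natCast, mul_comm]
    gcongr
    compute_degree
  · simp [← hD, hDpos.ne']
  · intro x hx1 hx2
    have e1 : d ^ 2 ≤ x ^ 2 := by rw [← sq_abs x]; gcongr
    have e2 : x ^ 2 ≤ L ^ 2 := by rw [← sq_abs x]; gcongr
    have hle : |y - 2 / (L ^ 2 - d ^ 2) * x ^ 2| ≤ 1 := by
      have : y - 2 / (L ^ 2 - d ^ 2) * x ^ 2 = (L ^ 2 + d ^ 2 - 2 * x ^ 2) / (L ^ 2 - d ^ 2) := by
        rw [hy]; ring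
      rw [this, abs_le, le_div_iff₀ hba, div_le_iff₀ hba]
      constructor <;> linarith
    have hc := Chebyshev.abs_eval_T_real_le_one (k : ℤ) hle
    simp only [eval_mul, eval_C, eval_comp, eval_sub, eval_pow, eval_X, abs_mul]
    rw [hrho, abs_of_pos (inv_pos.2 hDpos)]
    calc D⁻¹ * _ ≤ D⁻¹ * 1 := by gcongr
      _ ≤ (t ^ k / 2)⁻¹ * 1 := by gcongr
      _ = 2 * t⁻¹ ^ k := by rw [inv_pow]; field_simp

lemma aux_proj {M m : ℕ} (hmM : m ≤ M) (U : Matrix (Fin M) (Fin M) ℝ) (hU : Uᵀ * U = 1)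
    (Um : Matrix (Fin M) (Fin m) ℝ)
    (hUm : ∀ i j, Um i j = U i ⟨(j : ℕ), by have := j.isLt; omega⟩) :
    1 - Um * Umᵀ = U * diagonal (fun i : Fin M => if (i : ℕ) < m then (0 : ℝ) else 1) * Uᵀ := by
  have hU' : U * Uᵀ = 1 := mul_eq_one_comm.1 hU
  rw [← hU', sub_eq_iff_eq_add]
  ext a b
  rw [Matrix.add_apply, mul_apply, mul_apply, mul_apply]
  simp only [mul_diagonal, transpose_apply, hUm]
  have : ∑ x : Fin m, U a ⟨x, by have := x.isLt; omega⟩ * U b ⟨x, by have := x.isLt; omega⟩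
      = ∑ i : Fin M, if (i : ℕ) < m then U a i * U b i else 0 := by
    rw [← Finset.sum_filter]
    refine Finset.sum_bij (fun x _ => ⟨x, by have := x.isLt; omega⟩) ?_ ?_ ?_ ?_
    · intro x _; simp
    · intro x _ y _ h; simpa [Fin.ext_iff] using h
    · intro y hy; exact ⟨⟨y, by simpa using hy⟩, by simp, rfl⟩
    · intro x _; rfl
  rw [this, ← Finset.sum_add_distrib]
  refine Finset.sum_congr rfl fun i _ => ?_
  split_ifs <;> simp

/-- eigenvalue estimate in SVD coordinates -/
lemma aux_eig {M N m : ℕ} (hMN : N ≤ M) (σ : Fin N → ℝ) (hσ : ∀ i, 0 ≤ σ i)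
    (S : Matrix (Fin M) (Fin N) ℝ)
    (hS : ∀ i j, S i j = if (i : ℕ) = (j : ℕ) then σ j else 0)
    (τ d L : ℝ) (hd : ∀ i : Fin N, m ≤ (i : ℕ) → d ≤ |σ i - τ|) (hdτ : d ≤ τ) (hτ0 : 0 ≤ τ)
    (hL : ∀ i, σ i + τ ≤ L) (hτL : τ ≤ L)
    (z : Fin M ⊕ Fin N → ℝ) (hz : z ≠ 0)
    (e : Fin M ⊕ Fin N → ℝ)
    (he : e = Sum.elim (fun i : Fin M => if (i : ℕ) < m then (0 : ℝ) else 1)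
      (fun i : Fin N => if (i : ℕ) < m then (0 : ℝ) else 1))
    (hez : ∀ i, e i * z i = z i) (l : ℝ)
    (h : ∀ i, e i * (fromBlocks ((-τ) • 1) S Sᵀ ((-τ) • 1) *ᵥ z) i = l * z i) :
    d ≤ |l| ∧ |l| ≤ L := by
  have hinr : ∀ j : Fin N, m ≤ (j : ℕ) →
      σ j * z (Sum.inl ⟨j, by have := j.isLt; omega⟩) = (l + τ) * z (Sum.inr j) := by
    intro j hj
    have := h (Sum.inr j)
    rw [fromBlocks_mulVec] at this
    have e2 : (Sᵀ *ᵥ (z ∘ Sum.inl)) j = σ j * z (Sum.inl ⟨j, by have := j.isLt; omega⟩) := by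
      simp only [mulVec, dotProduct, transpose_apply, hS]
      rw [Finset.sum_eq_single ⟨j, by have := j.isLt; omega⟩]
      · simp
      · intro b _ hb
        have : (b : ℕ) ≠ j := fun hh => hb (Fin.ext hh)
        simp [this]
      · simp
    simp only [Sum.elim_inr, Pi.add_apply, e2, he, smul_mulVec, one_mulVec, Pi.smul_apply,
      Function.comp, smul_eq_mul, not_lt.2 hj, if_false] at this
    linarith
  have hinl : ∀ j : Fin N, m ≤ (j : ℕ) →
      σ j * z (Sum.inr j) = (l + τ) * z (Sum.inl ⟨j, by have := j.isLt; omega⟩) := by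
    intro j hj
    have := h (Sum.inl ⟨j, by have := j.isLt; omega⟩)
    rw [fromBlocks_mulVec] at this
    have e2 : (S *ᵥ (z ∘ Sum.inr)) ⟨j, by have := j.isLt; omega⟩ = σ j * z (Sum.inr j) := by
      simp only [mulVec, dotProduct, hS]
      rw [Finset.sum_eq_single j]
      · simp
      · intro b _ hb
        have : (j : ℕ) ≠ b := fun hh => hb (Fin.ext hh.symm)
        simp [this]
      · simp
    simp only [Sum.elim_inl, Pi.add_apply, e2, he, smul_mulVec, one_mulVec, Pi.smul_apply,
      Function.comp, smul_eq_mul, not_lt.2 hj, if_false] at this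
    linarith
  have hbig : ∀ i : Fin M, m ≤ (i : ℕ) → N ≤ (i : ℕ) → (l + τ) * z (Sum.inl i) = 0 := by
    intro i hi hiN
    have := h (Sum.inl i)
    rw [fromBlocks_mulVec] at this
    have e2 : (S *ᵥ (z ∘ Sum.inr)) i = 0 := by
      simp only [mulVec, dotProduct, hS]
      refine Finset.sum_eq_zero fun b _ => ?_
      have : (i : ℕ) ≠ b := by have := b.isLt; omega
      simp [this]
    simp only [Sum.elim_inl, Pi.add_apply, e2, he, smul_mulVec, one_mulVec, Pi.smul_apply,
      Function.comp, smul_eq_mul, not_lt.2 hi, if_false] at this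
    linarith
  have key : ∀ j : Fin N, m ≤ (j : ℕ) → (l + τ) ^ 2 = σ j ^ 2 → d ≤ |l| ∧ |l| ≤ L := by
    intro j hj hh
    have h1 := hd j hj
    have h2 := hL j
    have h3 := hσ j
    rcases sq_eq_sq_iff_eq_or_eq_neg.1 hh with hh | hh
    · have : l = σ j - τ := by linarith
      rw [this]
      refine ⟨h1, abs_le.2 ⟨by linarith, by linarith⟩⟩
    · have : l = -(σ j + τ) := by linarith
      rw [this, abs_neg, abs_of_nonneg (by linarith)]
      exact ⟨by linarith, h2⟩
  obtain ⟨i, hi⟩ := Function.ne_iff.1 hz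
  have hi : z i ≠ 0 := hi
  have hezi := hez i
  rcases i with i | j
  · have him : m ≤ (i : ℕ) := by
      by_contra hcon
      simp [he, not_le.1 hcon] at hezi
      exact hi hezi.symm
    by_cases hiN : (i : ℕ) < N
    · have e1 := hinl ⟨i, hiN⟩ him
      have e2 := hinr ⟨i, hiN⟩ him
      refine key ⟨i, hiN⟩ him ?_
      refine mul_right_cancel₀ hi ?_
      simp only [Fin.eta] at e1 e2
      linear_combination (-(l + τ)) * e1 - σ ⟨i, hiN⟩ * e2
    · have := hbig i him (not_lt.1 hiN)
      have : l = -τ := by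
        rcases mul_eq_zero.1 this with h | h
        · linarith
        · exact absurd h hi
      rw [this, abs_neg, abs_of_nonneg hτ0]
      exact ⟨hdτ, hτL⟩
  · have him : m ≤ (j : ℕ) := by
      by_contra hcon
      simp [he, not_le.1 hcon] at hezi
      exact hi hezi.symm
    have e1 := hinl j him
    have e2 := hinr j him
    refine key j him ?_
    refine mul_right_cancel₀ hi ?_
    linear_combination (-(l + τ)) * e2 - σ j * e1

/-- Theorem 4.2(iii). MINRES bound for the preconditioned JDSVD
correction equation with exact singular subspaces, in the interior case. -/
theorem minres_bound_precond_exact_interior {M N m : ℕ} (hN : 2 ≤ N) (hMN : N ≤ M)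
    (hm : 1 ≤ m) (hmN : m < N)
    (A : Matrix (Fin M) (Fin N) ℝ)
    (U : Matrix (Fin M) (Fin M) ℝ) (V : Matrix (Fin N) (Fin N) ℝ)
    (hU : Uᵀ * U = 1) (hV : Vᵀ * V = 1)
    (σ : Fin N → ℝ) (hσ : ∀ i, 0 ≤ σ i)
    (S : Matrix (Fin M) (Fin N) ℝ)
    (hS : ∀ i j, S i j = if (i : ℕ) = (j : ℕ) then σ j else 0)
    (hA : A = U * S * Vᵀ)
    (τ : ℝ) (hτ0 : 0 ≤ τ)
    (hclosest : ∀ i j : Fin N, (i : ℕ) < m → m ≤ (j : ℕ) → |σ i - τ| ≤ |σ j - τ|)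
    (hτσ : ∀ i : Fin N, τ ≠ σ i)
    (σmax σmaxm1 σmin σminm1 : ℝ)
    (hσmax : IsGreatest (Set.range σ) σmax)
    (hσmaxm1 : IsGreatest (σ '' {i : Fin N | m ≤ (i : ℕ)}) σmaxm1)
    (hσmin : IsLeast (Set.range σ) σmin)
    (hσminm1 : IsLeast (σ '' {i : Fin N | m ≤ (i : ℕ)}) σminm1)
    (hτ1 : (σmin + σminm1) / 2 < τ) (hτ2 : τ < (σmax + σmaxm1) / 2)
    (dm1 : ℝ)
    (hdm1 : IsLeast ((fun i => |σ i - τ|) '' {i : Fin N | m ≤ (i : ℕ)}) dm1)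
    (Um : Matrix (Fin M) (Fin m) ℝ)
    (hUm : ∀ i j, Um i j = U i ⟨(j : ℕ), by have := j.isLt; omega⟩)
    (Vm : Matrix (Fin N) (Fin m) ℝ)
    (hVm : ∀ i j, Vm i j = V i ⟨(j : ℕ), by have := j.isLt; omega⟩)
    (B P Bm : Matrix (Fin M ⊕ Fin N) (Fin M ⊕ Fin N) ℝ)
    (hB : B = Matrix.fromBlocks ((-τ) • 1) A Aᵀ ((-τ) • 1))
    (hP : P = Matrix.fromBlocks (1 - Um * Umᵀ) 0 0 (1 - Vm * Vmᵀ))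
    (hBm : Bm = P * B * P)
    (r : Fin M ⊕ Fin N → ℝ) (hr : P *ᵥ r = r) :
    ∀ j : ℕ, ∃ w ∈ Krylov Bm r j,
      vnorm (Bm *ᵥ w + r) ≤
        2 * (1 - 2 / (1 + (σmax + τ) / dm1)) ^ (j / 2) * vnorm r := by
  intro j
  obtain ⟨id, hid, hid'⟩ := hdm1.1
  have hdpos : 0 < dm1 := by
    rw [← hid']; exact abs_pos.2 (sub_ne_zero.2 (hτσ id).symm)
  have hdle : ∀ i : Fin N, m ≤ (i : ℕ) → dm1 ≤ |σ i - τ| := fun i hi => hdm1.2 ⟨i, hi, rfl⟩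
  have hσle : ∀ i, σ i ≤ σmax := fun i => hσmax.2 ⟨i, rfl⟩
  have hmin0 : 0 ≤ σmin := by
    obtain ⟨i, hi⟩ := hσmin.1; rw [← hi]; exact hσ i
  have hdτ : dm1 ≤ τ := by
    obtain ⟨i, hi, hi'⟩ := hσminm1.1
    refine (hdle i hi).trans (abs_le.2 ⟨?_, ?_⟩)
    · have := hσ i; linarith
    · rw [hi']; linarith
  have hmaxm1 : σmaxm1 ≤ σmax := by
    obtain ⟨i, hi, hi'⟩ := hσmaxm1.1
    rw [← hi']; exact hσle i
  have hdL : dm1 < σmax + τ := by linarith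
  obtain ⟨p, hpdeg, hp0, hpb⟩ := aux_cheb dm1 (σmax + τ) hdpos hdL (j / 2)
  obtain ⟨w, hw, hweq⟩ := aux_krylov Bm r j p (by omega) hp0
  refine ⟨w, hw, ?_⟩
  rw [hweq]
  have hUU : U * Uᵀ = 1 := mul_eq_one_comm.1 hU
  have hVV : V * Vᵀ = 1 := mul_eq_one_comm.1 hV
  set W : Matrix (Fin M ⊕ Fin N) (Fin M ⊕ Fin N) ℝ := fromBlocks U 0 0 V with hW
  set T : Matrix (Fin M ⊕ Fin N) (Fin M ⊕ Fin N) ℝ :=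
    fromBlocks ((-τ) • 1) S Sᵀ ((-τ) • 1) with hT
  set e : Fin M ⊕ Fin N → ℝ := Sum.elim (fun i : Fin M => if (i : ℕ) < m then (0 : ℝ) else 1)
      (fun i : Fin N => if (i : ℕ) < m then (0 : ℝ) else 1) with he
  have hWW : Wᵀ * W = 1 := by
    rw [hW, fromBlocks_transpose, fromBlocks_multiply]; simp [hU, hV, fromBlocks_one]
  have hWW' : W * Wᵀ = 1 := mul_eq_one_comm.1 hWW
  have hPW : P = W * diagonal e * Wᵀ := by
    rw [hP, aux_proj (by omega) U hU Um hUm, aux_proj (by omega) V hV Vm hVm, hW, he,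
      ← fromBlocks_diagonal, fromBlocks_transpose, fromBlocks_multiply, fromBlocks_multiply]
    simp
  have hBW : B = W * T * Wᵀ := by
    rw [hB, hW, hT, fromBlocks_transpose, fromBlocks_multiply, fromBlocks_multiply, hA]
    simp [hUU, hVV, Matrix.mul_assoc]
  have hPT : Pᵀ = P := by
    rw [hPW]; simp [Matrix.mul_assoc]
  have hBT : Bᵀ = B := by
    rw [hB, fromBlocks_transpose]; simp
  have hee : diagonal e * diagonal e = diagonal e := by
    rw [diagonal_mul_diagonal]
    congr 1
    ext i
    rcases i with i | i <;> simp [he]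
  have hPP : P * P = P := by
    have : P * P = W * diagonal e * (Wᵀ * W) * diagonal e * Wᵀ := by
      rw [hPW]; simp only [Matrix.mul_assoc]
    rw [this, hWW, Matrix.mul_one, Matrix.mul_assoc W, hee, ← hPW]
  have hBmT : Bmᵀ = Bm := by
    rw [hBm, transpose_mul, transpose_mul, hPT, hBT, Matrix.mul_assoc]
  have hrho : 0 ≤ 1 - 2 / (1 + (σmax + τ) / dm1) := by
    have : 1 < (σmax + τ) / dm1 := by rwa [one_lt_div hdpos]
    rw [sub_nonneg, div_le_one (by linarith)]
    linarith
  refine aux_poly_bound Bm hBmT p _ (by positivity) r ?_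
  intro l v hv hvr
  have hPv : P *ᵥ v ≠ 0 := by
    intro h0
    apply hvr
    rw [← hr, dotProduct_mulVec, ← hPT, vecMul_transpose, h0, zero_dotProduct]
  have hz : Wᵀ *ᵥ (P *ᵥ v) ≠ 0 := by
    intro h0
    apply hPv
    have := congrArg (fun x => W *ᵥ x) h0
    simpa [mulVec_mulVec, ← Matrix.mul_assoc, hWW'] using this
  have hWP : Wᵀ * P = diagonal e * Wᵀ := by
    rw [hPW, ← Matrix.mul_assoc, ← Matrix.mul_assoc, hWW, Matrix.one_mul]
  have hWB : Wᵀ * B = T * Wᵀ := by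
    rw [hBW, ← Matrix.mul_assoc, ← Matrix.mul_assoc, hWW, Matrix.one_mul]
  have hez : diagonal e *ᵥ (Wᵀ *ᵥ (P *ᵥ v)) = Wᵀ *ᵥ (P *ᵥ v) := by
    rw [mulVec_mulVec, ← hWP, mulVec_mulVec, Matrix.mul_assoc, hPP, ← mulVec_mulVec]
  have hTz : diagonal e *ᵥ (T *ᵥ (Wᵀ *ᵥ (P *ᵥ v))) = l • (Wᵀ *ᵥ (P *ᵥ v)) := by
    have h1 : P *ᵥ (Bm *ᵥ v) = Bm *ᵥ v := by
      rw [mulVec_mulVec, hBm, ← Matrix.mul_assoc, ← Matrix.mul_assoc, hPP]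
    have h2 : Wᵀ *ᵥ (Bm *ᵥ v) = l • (Wᵀ *ᵥ (P *ᵥ v)) := by
      rw [← h1, hv, mulVec_smul, mulVec_smul]
    rw [← h2, hBm]
    simp only [mulVec_mulVec, ← Matrix.mul_assoc]
    rw [hWP, Matrix.mul_assoc (diagonal e) Wᵀ B, hWB, Matrix.mul_assoc (diagonal e) T]
  have hfin := aux_eig (m := m) hMN σ hσ S hS τ dm1 (σmax + τ) hdle hdτ hτ0
    (fun i => by have := hσle i; linarith) (by linarith) _ hz e he
    (fun i => by have := congrFun hez i; rwa [mulVec_diagonal] at this) l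
    (fun i => by have := congrFun hTz i; rwa [mulVec_diagonal] at this)
  exact hpb l hfin.1 hfin.2
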